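/- For every R' > 0 and every open neighborhood U of 0 in V = ℝ^d there exists R₀ > 0 such that for every R > R₀ there exist a finite subset Y ⊆ U and, for each y ∈ Y, an analytic map Φ_y from the open ball {λ ∈ L : ‖λ‖ < R'} to the Banach space of bounded continuous functions V → ℂ (with the supremum norm), such that for every λ with ‖λ‖ < R', every f ∈ 𝔓(λ), and every v ∈ V, one has f(v) = Σ_{y ∈ Y} f(y) · Φ_y(λ)(v) · e^{R‖v‖}. (In other words, the family of finite-dimensional spaces 𝔓(λ) of polynomial exponential functions, viewed inside the weighted sup-norm space of functions f with sup_v |f(v)| e^{−R‖v‖} < ∞, admits a holomorphic section with respect to the restriction map to the finite set Y.) -/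

import Mathlib

open scoped Classical in
/-- The space `𝔓(λ)` of polynomial exponential functions on `V = ℝ^d` attached to a tuple
`λ = (λ₁, …, λₙ)` of ℝ-linear maps `V → ℂ`: functions of the form
`v ↦ Σ_μ e^{μ(v)} P_μ(v)` where `μ` runs over the distinct values among the `λᵢ` and
`P_μ` is a polynomial of total degree `< #{i : λᵢ = μ}`. -/
noncomputable def polyExpSpace {d n : ℕ}
    (lam : Fin n → (EuclideanSpace ℝ (Fin d) →L[ℝ] ℂ)) :
    Set (EuclideanSpace ℝ (Fin d) → ℂ) :=
  { f | ∃ P : (EuclideanSpace ℝ (Fin d) →L[ℝ] ℂ) → MvPolynomial (Fin d) ℂ,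
      (∀ i : Fin n, (P (lam i)).totalDegree <
        (Finset.univ.filter fun j : Fin n => lam j = lam i).card) ∧
      ∀ v, f v = ∑ μ ∈ Finset.univ.image lam,
        Complex.exp (μ v) * MvPolynomial.eval (fun j => ((v j : ℝ) : ℂ)) (P μ) }


open Filter Topology

namespace PolyExp

/-- operator algebra -/
abbrev Op (n : ℕ) := (Fin n → ℂ) →L[ℂ] (Fin n → ℂ)

/-- nilpotent shift -/
noncomputable def shiftOp (n : ℕ) : Op n :=
  ContinuousLinearMap.pi fun k : Fin n =>
    if h : (k : ℕ) + 1 < n then ContinuousLinearMap.proj (R := ℂ) (φ := fun _ : Fin n => ℂ) ⟨k + 1, h⟩ else 0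

/-- diagonal unit -/
noncomputable def diagOp (n : ℕ) (k : Fin n) : Op n :=
  (ContinuousLinearMap.single ℂ (fun _ : Fin n => ℂ) k).comp
    (ContinuousLinearMap.proj (R := ℂ) (φ := fun _ : Fin n => ℂ) k)

/-- the bidiagonal operator -/
noncomputable def bidiag {n : ℕ} (l : Fin n → ℂ) : Op n :=
  (∑ k, l k • diagOp n k) + shiftOp n

/-- rank one operator e_j e_0^T -/
noncomputable def rankOp (n : ℕ) [NeZero n] (j : Fin n) : Op n :=
  (ContinuousLinearMap.single ℂ (fun _ : Fin n => ℂ) j).comp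
    (ContinuousLinearMap.proj (R := ℂ) (φ := fun _ : Fin n => ℂ) 0)

lemma bidiag_apply {n : ℕ} (l : Fin n → ℂ) (x : Fin n → ℂ) (k : Fin n) :
    bidiag l x k = l k * x k + if h : (k : ℕ) + 1 < n then x ⟨k + 1, h⟩ else 0 := by
  have h1 : shiftOp n x k = if h : (k : ℕ) + 1 < n then x ⟨k + 1, h⟩ else 0 := by
    simp only [shiftOp, ContinuousLinearMap.pi_apply]
    split_ifs <;> simp
  rw [bidiag, add_apply, Pi.add_apply, h1]
  congr 1
  simp [diagOp, Pi.single_apply]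

lemma rankSum_apply {n : ℕ} [NeZero n] (Z : Fin n → Op n) (u : Fin n → ℂ) (i : Fin n) :
    (∑ j, rankOp n j * Z j) u i = Z i u 0 := by
  simp [rankOp, Pi.single_apply]

lemma isUnit_of_inj {n : ℕ} (Z : Op n) (h : ∀ u, Z u = 0 → u = 0) : IsUnit Z := by
  rw [ContinuousLinearMap.isUnit_iff_bijective]
  have hi : Function.Injective (Z : (Fin n → ℂ) →ₗ[ℂ] (Fin n → ℂ)) := by
    rw [injective_iff_map_eq_zero]; exact h
  exact ⟨hi, LinearMap.injective_iff_surjective.1 hi⟩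

lemma isUnit_bidiag {n : ℕ} [NeZero n] (l : Fin n → ℂ) :
    IsUnit (∑ j : Fin n, rankOp n j * (bidiag l) ^ (j : ℕ)) := by
  apply isUnit_of_inj
  intro u hu
  have h0 : ∀ j : ℕ, j < n → ((bidiag l) ^ j) u 0 = 0 := by
    intro j hj
    have := congrFun hu ⟨j, hj⟩
    rwa [rankSum_apply] at this
  have key : ∀ k : ℕ, ∀ j : ℕ, (h : j + k < n) → ((bidiag l) ^ j) u ⟨k, by omega⟩ = 0 := by
    intro k
    induction k with
    | zero => intro j h; exact h0 j (by omega)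
    | succ k ih =>
      intro j h
      have h1 := ih (j + 1) (by omega)
      rw [pow_succ', mul_apply_eq_comp, bidiag_apply, ih j (by omega),
        dif_pos (show k + 1 < n by omega)] at h1
      simpa using h1
  funext k
  simpa using key k 0 (by simp)

lemma exp_natmul' {A : Type*} [NormedRing A] [NormedAlgebra ℂ A] [CompleteSpace A]
    (a : A) (h : ℂ) (j : ℕ) :
    NormedSpace.exp (((j : ℂ) * h) • a) = NormedSpace.exp (h • a) ^ j := by
  let _ : NormedAlgebra ℚ A := NormedAlgebra.restrictScalars ℚ ℂ A
  rw [← NormedSpace.exp_nsmul, mul_smul, Nat.cast_smul_eq_nsmul]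

lemma exp_natmul {n : ℕ} (A : Op n) (h : ℂ) (j : ℕ) :
    NormedSpace.exp (((j : ℂ) * h) • A) = NormedSpace.exp (h • A) ^ j :=
  exp_natmul' A h j

lemma pow_expand {A : Type*} [Ring A] [Algebra ℂ A] (B : A) (c : ℂ) (i : ℕ) :
    (c • (B - 1)) ^ i = ∑ m ∈ Finset.range (i + 1),
      (c ^ i * ((-1) ^ (i - m) * (i.choose m : ℂ))) • B ^ m := by
  rw [smul_pow, sub_eq_add_neg, (Commute.neg_one_right B).add_pow, Finset.smul_sum]
  refine Finset.sum_congr rfl fun m _ => ?_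
  rw [mul_smul]
  congr 1
  rcases Nat.even_or_odd (i - m) with h | h
  · rw [h.neg_one_pow, h.neg_one_pow, mul_one, one_mul, Nat.cast_smul_eq_nsmul, nsmul_eq_mul,
      (Nat.cast_commute _ _).eq]
  · rw [h.neg_one_pow, h.neg_one_pow, neg_one_mul, neg_smul, Nat.cast_smul_eq_nsmul, nsmul_eq_mul,
      (Nat.cast_commute _ _).eq, mul_neg_one, neg_mul]

lemma unit_transfer {n : ℕ} [NeZero n] (B : Op n) (c : ℂ)
    (hW : IsUnit (∑ j : Fin n, rankOp n j * (c • (B - 1)) ^ (j : ℕ))) :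
    IsUnit (∑ j : Fin n, rankOp n j * B ^ (j : ℕ)) := by
  apply isUnit_of_inj
  intro u hu
  have h0 : ∀ j : ℕ, j < n → (B ^ j) u 0 = 0 := by
    intro j hj
    have := congrFun hu ⟨j, hj⟩
    rwa [rankSum_apply] at this
  have h1 : (∑ j : Fin n, rankOp n j * (c • (B - 1)) ^ (j : ℕ)) u = 0 := by
    funext i
    rw [rankSum_apply, pow_expand]
    simp only [sum_apply, Finset.sum_apply, Pi.zero_apply]
    refine Finset.sum_eq_zero fun m hm => ?_
    have hm' : m < n := by have := Finset.mem_range.1 hm; omega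
    rw [smul_apply, Pi.smul_apply, h0 m hm', smul_zero]
  have h2 := (ContinuousLinearMap.isUnit_iff_bijective.1 hW).1
  exact h2 (by rw [h1, map_zero])

lemma continuous_bidiag {n : ℕ} : Continuous (bidiag (n := n)) := by
  unfold bidiag; fun_prop

lemma analytic_bidiag {n : ℕ} (s : Set (Fin n → ℂ)) : AnalyticOnNhd ℂ (bidiag (n := n)) s := by
  unfold bidiag
  apply AnalyticOnNhd.add _ analyticOnNhd_const
  apply Finset.analyticOnNhd_fun_sum
  intro k _
  apply AnalyticOnNhd.smul _ analyticOnNhd_const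
  exact (ContinuousLinearMap.proj (R := ℂ) (φ := fun _ : Fin n => ℂ) k).analyticOnNhd s

/-- uniform invertibility for small steps -/
lemma eventually_unit {n : ℕ} [NeZero n] (R' : ℝ) :
    ∀ᶠ h : ℝ in 𝓝[>] 0, ∀ l : Fin n → ℂ, ‖l‖ ≤ R' →
      IsUnit (∑ j : Fin n, rankOp n j * NormedSpace.exp ((((j : ℕ) : ℂ) * (h : ℂ)) • bidiag l)) := by
  set K : Set (Op n) := bidiag '' Metric.closedBall 0 R' with hK
  have hKc : IsCompact K := (isCompact_closedBall 0 R').image continuous_bidiag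
  set T : Set (Op n) := {Z | IsUnit (∑ j : Fin n, rankOp n j * Z ^ (j : ℕ))} with hT
  have hTo : IsOpen T := by
    have hc : Continuous fun Z : Op n => ∑ j : Fin n, rankOp n j * Z ^ (j : ℕ) := by fun_prop
    exact (Units.isOpen (R := Op n)).preimage hc
  have hKT : K ⊆ T := by
    rintro _ ⟨l, -, rfl⟩
    exact isUnit_bidiag l
  obtain ⟨δ, hδ, hsub⟩ := hKc.exists_thickening_subset_open hTo hKT
  obtain ⟨C, hC⟩ := hKc.isBounded.exists_norm_le
  set C' := max C 1
  have hC'0 : 0 < C' := lt_of_lt_of_le one_pos (le_max_right _ _)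
  have hd := (hasFDerivAt_exp_zero (𝕂 := ℂ) (𝔸 := Op n)).isLittleO
  have hd2 := hd.def (c := δ / (2 * C')) (by positivity)
  rw [Metric.eventually_nhds_iff] at hd2
  obtain ⟨ε, hε, hd3⟩ := hd2
  have : ∀ᶠ h : ℝ in 𝓝[>] 0, h < ε / C' :=
    nhdsWithin_le_nhds (eventually_lt_nhds (by positivity))
  filter_upwards [this, self_mem_nhdsWithin] with h h1 h2 l hl
  have h2 : 0 < h := h2
  simp_rw [exp_natmul]
  apply unit_transfer _ ((h : ℂ)⁻¹)
  apply hsub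
  rw [Metric.mem_thickening_iff]
  have hmem : bidiag l ∈ K := ⟨l, by simpa using hl, rfl⟩
  refine ⟨_, hmem, ?_⟩
  have hA : ‖bidiag l‖ ≤ C' := (hC _ hmem).trans (le_max_left _ _)
  have hnorm : ‖(h : ℂ) • bidiag l‖ ≤ h * C' := by
    rw [norm_smul, Complex.norm_real, Real.norm_of_nonneg h2.le]
    gcongr
  have h3 := @hd3 ((h : ℂ) • bidiag l) (by
    rw [dist_zero_right]
    refine hnorm.trans_lt ?_
    rwa [lt_div_iff₀ hC'0] at h1)
  simp only [NormedSpace.exp_zero, sub_zero, one_apply_eq_self] at h3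
  have hh : (h : ℂ) ≠ 0 := by exact_mod_cast h2.ne'
  have h4 : (h : ℂ)⁻¹ • (NormedSpace.exp ((h : ℂ) • bidiag l) - 1) - bidiag l =
      (h : ℂ)⁻¹ • (NormedSpace.exp ((h : ℂ) • bidiag l) - 1 - (h : ℂ) • bidiag l) := by
    rw [smul_sub _ _ ((h : ℂ) • bidiag l), smul_smul, inv_mul_cancel₀ hh, one_smul]
  rw [dist_eq_norm, h4, norm_smul, norm_inv, Complex.norm_real, Real.norm_of_nonneg h2.le]
  calc h⁻¹ * _ ≤ h⁻¹ * (δ / (2 * C') * (h * C')) := by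
        gcongr
        exact h3.trans (by gcongr)
    _ = δ / 2 := by field_simp
    _ < δ := by linarith

/-- polynomial chain -/
noncomputable def chain {n : ℕ} (l : Fin n → ℂ) (μ : ℂ) (P : Polynomial ℂ) : ℕ → Polynomial ℂ
  | 0 => P
  | k + 1 => if h : k < n then
      Polynomial.C (μ - l ⟨k, h⟩) * chain l μ P k + Polynomial.derivative (chain l μ P k) else 0

open scoped Classical in
lemma chain_coeff {n : ℕ} (l : Fin n → ℂ) (μ : ℂ) (P : Polynomial ℂ)
    (hP : ∀ j, (Finset.univ.filter fun i : Fin n => l i = μ).card ≤ j → P.coeff j = 0) (k : ℕ) :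
    k ≤ n → ∀ j, (Finset.univ.filter fun i : Fin n => k ≤ (i : ℕ) ∧ l i = μ).card ≤ j →
      (chain l μ P k).coeff j = 0 := by
  induction k with
  | zero => intro _ j hj; exact hP j (by simpa using hj)
  | succ k ih =>
    intro hk j hj
    have hkn : k < n := hk
    have ih := ih hkn.le
    simp only [chain, dif_pos hkn, Polynomial.coeff_add, Polynomial.coeff_C_mul,
      Polynomial.coeff_derivative]
    by_cases hl : l ⟨k, hkn⟩ = μ
    · have hc : (Finset.univ.filter fun i : Fin n => k ≤ (i : ℕ) ∧ l i = μ) =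
          insert ⟨k, hkn⟩ (Finset.univ.filter fun i : Fin n => k + 1 ≤ (i : ℕ) ∧ l i = μ) := by
        ext i
        simp only [Finset.mem_filter, Finset.mem_univ, true_and, Finset.mem_insert, Fin.ext_iff]
        constructor
        · rintro ⟨h1, h2⟩
          by_cases h : (i : ℕ) = k
          · exact Or.inl h
          · exact Or.inr ⟨by omega, h2⟩
        · rintro (h | ⟨h1, h2⟩)
          · have : i = ⟨k, hkn⟩ := Fin.ext h
            exact ⟨h.ge, this ▸ hl⟩
          · exact ⟨by omega, h2⟩
      have hcard := Finset.card_insert_le (⟨k, hkn⟩ : Fin n)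
        (Finset.univ.filter fun i : Fin n => k + 1 ≤ (i : ℕ) ∧ l i = μ)
      rw [← hc] at hcard
      rw [ih (j + 1) (by omega), hl]; simp
    · have hc : (Finset.univ.filter fun i : Fin n => k ≤ (i : ℕ) ∧ l i = μ) =
          (Finset.univ.filter fun i : Fin n => k + 1 ≤ (i : ℕ) ∧ l i = μ) := by
        ext i
        simp only [Finset.mem_filter, Finset.mem_univ, true_and]
        constructor
        · rintro ⟨h1, h2⟩
          refine ⟨?_, h2⟩
          rcases Nat.eq_or_lt_of_le h1 with h | h
          · exfalso
            apply hl
            have : i = ⟨k, hkn⟩ := Fin.ext h.symm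
            exact this ▸ h2
          · exact h
        · rintro ⟨h1, h2⟩
          exact ⟨by omega, h2⟩
      rw [ih j (by rw [hc]; exact hj), ih (j + 1) (by rw [hc]; omega)]; simp

/-- solution of the ODE system by the operator exponential -/
lemma ode_unique {n : ℕ} (A : Op n) (F : ℂ → Fin n → ℂ)
    (hF : ∀ z, HasDerivAt F (A (F z)) z) (z : ℂ) :
    F z = NormedSpace.exp (z • A) (F 0) := by
  set G : ℂ → Fin n → ℂ := fun s => NormedSpace.exp ((z - s) • A) (F s) with hG
  have hd : ∀ s, HasDerivAt G 0 s := by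
    intro s
    have h1 : HasDerivAt (fun s : ℂ => NormedSpace.exp ((z - s) • A))
        ((-1 : ℂ) • (NormedSpace.exp ((z - s) • A) * A)) s :=
      (hasDerivAt_exp_smul_const (𝕂 := ℂ) A (z - s)).scomp s ((hasDerivAt_id s).const_sub z)
    have h2 := h1.clm_apply (hF s)
    refine h2.congr_deriv ?_
    rw [smul_apply, mul_apply_eq_comp, neg_one_smul, neg_add_cancel]
  have h3 := is_const_of_deriv_eq_zero (fun s => (hd s).differentiableAt) (fun s => (hd s).deriv) z 0
  simp only [hG, sub_self, sub_zero] at h3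
  have h4 : (0 : ℂ) • A = 0 := zero_smul ℂ A
  rw [← h3, h4, NormedSpace.exp_zero, one_apply_eq_self]

open scoped Classical in
lemma flow {n : ℕ} [NeZero n] (l : Fin n → ℂ) (μ : ℂ) (m : ℕ)
    (hm : m < (Finset.univ.filter fun i : Fin n => l i = μ).card) :
    ∃ w : Fin n → ℂ, ∀ z : ℂ, Complex.exp (μ * z) * z ^ m =
      NormedSpace.exp (z • bidiag l) w 0 := by
  set Q := chain l μ (Polynomial.X ^ m) with hQ
  have hQn : Q n = 0 := by
    ext j
    rw [hQ, chain_coeff l μ (Polynomial.X ^ m) _ n le_rfl j]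
    · simp
    · rw [Finset.filter_false_of_mem]
      · simp
      · intro i _ h; have := i.2; omega
    · intro j hj
      rw [Polynomial.coeff_X_pow, if_neg (by omega)]
  set F : ℂ → Fin n → ℂ := fun z k => Complex.exp (μ * z) * (Q k).eval z with hFdef
  have hF : ∀ z, HasDerivAt F (bidiag l (F z)) z := by
    intro z
    rw [hasDerivAt_pi]
    intro k
    have h1 : HasDerivAt (fun z : ℂ => Complex.exp (μ * z)) (Complex.exp (μ * z) * (μ * 1)) z :=
      ((hasDerivAt_id z).const_mul μ).cexp
    have h2 := h1.mul ((Q k).hasDerivAt z)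
    refine h2.congr_deriv ?_
    rw [bidiag_apply]
    have hs : Q ((k : ℕ) + 1) = Polynomial.C (μ - l k) * Q k + Polynomial.derivative (Q k) := by
      simp [hQ, chain]
    have h3 : (if h : (k : ℕ) + 1 < n then F z ⟨k + 1, h⟩ else 0) =
        Complex.exp (μ * z) * (Q ((k : ℕ) + 1)).eval z := by
      split_ifs with h
      · rfl
      · have : (k : ℕ) + 1 = n := by have := k.2; omega
        rw [this, hQn]; simp
    rw [h3, hs]
    simp [hFdef]
    ring
  refine ⟨F 0, fun z => ?_⟩
  rw [← ode_unique _ F hF z]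
  simp [hFdef, hQ, chain]

/-- the weighted exponential as an analytic map into bounded continuous functions -/
lemma weighted_exp {V : Type*} [NormedAddCommGroup V] {A : Type*} [NormedRing A] [NormedAlgebra ℂ A]
    [CompleteSpace A] (ℓ : A →L[ℂ] ℂ) (φ : V → ℝ) (hφ : Continuous φ) (hφ' : ∀ v, |φ v| ≤ ‖v‖)
    (r : ℝ) (hr : 0 < r) :
    ∃ E : A → BoundedContinuousFunction V ℂ, AnalyticOnNhd ℂ E (Metric.ball 0 r) ∧
      ∀ a ∈ Metric.ball (0 : A) r, ∀ v, E a v =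
        ℓ (NormedSpace.exp ((φ v : ℂ) • a)) * Real.exp (-(r * ‖v‖)) := by
  have hb : ∀ k : ℕ, ∀ v, ‖((φ v : ℂ) ^ k / (k.factorial : ℂ)) * (Real.exp (-(r * ‖v‖)) : ℂ)‖
      ≤ (r ^ k)⁻¹ := by
    intro k v
    rw [norm_mul, norm_div, norm_pow, Complex.norm_real, Complex.norm_natCast, Complex.norm_real,
      Real.norm_of_nonneg (Real.exp_pos _).le, Real.exp_neg, Real.norm_eq_abs]
    have h1 := Real.pow_div_factorial_le_exp (r * ‖v‖) (by positivity) k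
    have h2 : |φ v| ^ k ≤ ‖v‖ ^ k := pow_le_pow_left₀ (abs_nonneg _) (hφ' v) k
    have h3 : |φ v| ^ k / (k.factorial : ℝ) ≤ (r ^ k)⁻¹ * Real.exp (r * ‖v‖) := by
      calc |φ v| ^ k / (k.factorial : ℝ) ≤ ‖v‖ ^ k / (k.factorial : ℝ) := by gcongr
        _ = (r ^ k)⁻¹ * ((r * ‖v‖) ^ k / (k.factorial : ℝ)) := by rw [mul_pow]; field_simp
        _ ≤ _ := by gcongr
    rw [← div_eq_mul_inv, div_le_iff₀ (Real.exp_pos _)]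
    exact h3
  set g : ℕ → BoundedContinuousFunction V ℂ := fun k =>
    BoundedContinuousFunction.ofNormedAddCommGroup
      (fun v => ((φ v : ℂ) ^ k / (k.factorial : ℂ)) * (Real.exp (-(r * ‖v‖)) : ℂ))
      (by fun_prop) _ (hb k) with hg
  have hgn : ∀ k, ‖g k‖ ≤ (r ^ k)⁻¹ := fun k =>
    BoundedContinuousFunction.norm_ofNormedAddCommGroup_le _ (by positivity) (hb k)
  set p : FormalMultilinearSeries ℂ A (BoundedContinuousFunction V ℂ) := fun k =>
    (ContinuousLinearMap.smulRight ℓ (g k)).compContinuousMultilinearMap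
      (ContinuousMultilinearMap.mkPiAlgebraFin ℂ k A) with hp
  have hrad : ENNReal.ofReal r ≤ p.radius := by
    have : ENNReal.ofReal r = ((r.toNNReal : NNReal) : ENNReal) := rfl
    rw [this]
    apply p.le_radius_of_bound (‖ℓ‖ * max 1 ‖(1 : A)‖)
    intro k
    rw [Real.coe_toNNReal _ hr.le]
    have h1 : ‖p k‖ ≤ (‖ℓ‖ * (r ^ k)⁻¹) * max 1 ‖(1 : A)‖ := by
      refine (ContinuousLinearMap.norm_compContinuousMultilinearMap_le _ _).trans ?_
      rw [ContinuousLinearMap.norm_smulRight_apply]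
      gcongr
      · exact hgn k
      · exact ContinuousMultilinearMap.norm_mkPiAlgebraFin_le
    calc ‖p k‖ * r ^ k ≤ ((‖ℓ‖ * (r ^ k)⁻¹) * max 1 ‖(1 : A)‖) * r ^ k := by gcongr
      _ = _ := by field_simp
  have hpos : 0 < p.radius := lt_of_lt_of_le (by simpa using hr) hrad
  have hfp := p.hasFPowerSeriesOnBall hpos
  have hball : ∀ a ∈ Metric.ball (0 : A) r, a ∈ Metric.eball (0 : A) p.radius := by
    intro a ha
    rw [← Metric.eball_ofReal] at ha
    exact Metric.eball_subset_eball hrad ha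
  refine ⟨p.sum, fun a ha => hfp.analyticOnNhd a (hball a ha), ?_⟩
  intro a ha v
  have h1 := hfp.hasSum_sub (hball a ha)
  have h2 := (BoundedContinuousFunction.evalCLM ℂ v).hasSum h1
  have h3 := (ℓ.hasSum (NormedSpace.exp_series_hasSum_exp' (𝕂 := ℂ) ((φ v : ℂ) • a))).mul_right
    ((Real.exp (-(r * ‖v‖)) : ℝ) : ℂ)
  refine h2.unique (h3.congr_fun ?_)
  intro k
  simp [hp, hg, smul_pow]
  ring

open scoped Classical in
lemma one_dim {V : Type*} [NormedAddCommGroup V] {n : ℕ} [NeZero n] (R' h r : ℝ)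
    (hM : ∀ l : Fin n → ℂ, ‖l‖ ≤ R' →
      IsUnit (∑ j : Fin n, rankOp n j * NormedSpace.exp ((((j : ℕ) : ℂ) * (h : ℂ)) • bidiag l)))
    (hr0 : 0 < r) (hr : ∀ l : Fin n → ℂ, ‖l‖ ≤ R' → ‖bidiag l‖ < r)
    (φ : V → ℝ) (hφ : Continuous φ) (hφ' : ∀ v, |φ v| ≤ ‖v‖) :
    ∃ c : Fin n → (Fin n → ℂ) → BoundedContinuousFunction V ℂ,
      (∀ j, AnalyticOnNhd ℂ (c j) (Metric.ball 0 R')) ∧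
      ∀ l : Fin n → ℂ, ‖l‖ < R' → ∀ (μ : ℂ) (m : ℕ),
        m < (Finset.univ.filter fun i : Fin n => l i = μ).card → ∀ v,
        Complex.exp (μ * φ v) * (φ v : ℂ) ^ m =
          ∑ j : Fin n, (Complex.exp (μ * (((j : ℕ) : ℂ) * (h : ℂ))) * (((j : ℕ) : ℂ) * (h : ℂ)) ^ m)
            * (c j l v * Real.exp (r * ‖v‖)) := by
  set ℓ : Fin n → (Op n →L[ℂ] ℂ) := fun k =>
    (ContinuousLinearMap.proj (R := ℂ) (φ := fun _ : Fin n => ℂ) 0).comp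
      (ContinuousLinearMap.apply ℂ (Fin n → ℂ) (Pi.single k (1 : ℂ))) with hℓ
  have hℓa : ∀ k Z, ℓ k Z = Z (Pi.single k 1) 0 := fun k Z => rfl
  have hexp : ∀ (Z : Op n) (w : Fin n → ℂ), Z w 0 = ∑ k, w k * ℓ k Z := by
    intro Z w
    conv_lhs => rw [pi_eq_sum_univ' w]
    simp only [map_sum, map_smul, Finset.sum_apply, Pi.smul_apply, smul_eq_mul]
    refine Finset.sum_congr rfl fun k _ => ?_
    rw [hℓa]
  choose E hE1 hE2 using fun k => weighted_exp (ℓ k) φ hφ hφ' r hr0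
  set M : (Fin n → ℂ) → Op n := fun l =>
    ∑ j : Fin n, rankOp n j * NormedSpace.exp ((((j : ℕ) : ℂ) * (h : ℂ)) • bidiag l) with hMdef
  have hMan : AnalyticOnNhd ℂ M (Metric.ball 0 R') := by
    apply Finset.analyticOnNhd_fun_sum
    intro j _
    apply AnalyticOnNhd.mul analyticOnNhd_const
    intro l hl
    have h1 : AnalyticAt ℂ (fun l : Fin n → ℂ => (((j : ℕ) : ℂ) * (h : ℂ)) • bidiag l) l :=
      AnalyticAt.fun_smul analyticAt_const (analytic_bidiag _ l hl)
    exact (NormedSpace.exp_analytic (𝕂 := ℂ) (𝔸 := Op n) _).comp h1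
  have hInv : AnalyticOnNhd ℂ (fun l => Ring.inverse (M l)) (Metric.ball 0 R') := by
    intro l hl
    obtain ⟨u, hu⟩ := hM l (by simpa using (mem_ball_zero_iff.1 hl).le)
    have h1 : AnalyticAt ℂ Ring.inverse (M l) := by
      have := analyticAt_inverse (𝕜 := ℂ) u
      rwa [hu] at this
    exact h1.comp (hMan l hl)
  refine ⟨fun j l => ∑ k, (Ring.inverse (M l) (Pi.single j 1) k) • E k (bidiag l), ?_, ?_⟩
  · intro j
    apply Finset.analyticOnNhd_fun_sum
    intro k _
    intro l hl
    have hl' : ‖l‖ < R' := mem_ball_zero_iff.1 hl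
    apply AnalyticAt.fun_smul
    · have h1 := ((ContinuousLinearMap.proj (R := ℂ) (φ := fun _ : Fin n => ℂ) k).comp
        (ContinuousLinearMap.apply ℂ (Fin n → ℂ) (Pi.single j (1 : ℂ)))).analyticAt
          (Ring.inverse (M l))
      exact h1.comp_of_eq (hInv l hl) rfl
    · exact (hE1 k _ (mem_ball_zero_iff.2 (hr l hl'.le))).comp (analytic_bidiag _ l hl)
  · intro l hl μ m hm v
    obtain ⟨w, hw⟩ := flow l μ m hm
    set y : Fin n → ℂ := fun j =>
      Complex.exp (μ * (((j : ℕ) : ℂ) * (h : ℂ))) * (((j : ℕ) : ℂ) * (h : ℂ)) ^ m with hy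
    have hMw : M l w = y := by
      funext j
      rw [hMdef]
      simp only
      rw [rankSum_apply, hy]
      simp only
      rw [hw]
    have hw2 : w = Ring.inverse (M l) y := by
      have h1 := Ring.inverse_mul_cancel (M l) (hM l hl.le)
      have h2 := congrArg (fun Z : Op n => Z w) h1
      simp only [mul_apply_eq_comp, one_apply_eq_self] at h2
      rw [← hMw]; exact h2.symm
    have hw3 : ∀ k, w k = ∑ j, y j * Ring.inverse (M l) (Pi.single j 1) k := by
      intro k
      rw [hw2]
      conv_lhs => rw [pi_eq_sum_univ' y]
      simp only [map_sum, map_smul, Finset.sum_apply, Pi.smul_apply, smul_eq_mul]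
    have hb : bidiag l ∈ Metric.ball (0 : Op n) r := mem_ball_zero_iff.2 (hr l hl.le)
    have hee : ((Real.exp (-(r * ‖v‖)) : ℝ) : ℂ) * ((Real.exp (r * ‖v‖) : ℝ) : ℂ) = 1 := by
      rw [← Complex.ofReal_mul, ← Real.exp_add]; simp
    have hEe : ∀ k, E k (bidiag l) v * ((Real.exp (r * ‖v‖) : ℝ) : ℂ) =
        ℓ k (NormedSpace.exp ((φ v : ℂ) • bidiag l)) := by
      intro k
      rw [hE2 k _ hb v, mul_assoc, hee, mul_one]
    rw [hw, hexp]
    simp only [BoundedContinuousFunction.coe_sum, Finset.sum_apply,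
      BoundedContinuousFunction.coe_smul, smul_eq_mul]
    simp_rw [hw3, Finset.sum_mul, Finset.mul_sum]
    rw [Finset.sum_comm]
    refine Finset.sum_congr rfl fun j _ => Finset.sum_congr rfl fun k _ => ?_
    rw [← hEe]
    simp only [hy]
    ring

lemma exists_bound {n : ℕ} (R' : ℝ) :
    ∃ C : ℝ, ∀ l : Fin n → ℂ, ‖l‖ ≤ R' → ‖bidiag l‖ ≤ C := by
  obtain ⟨C, hC⟩ := ((isCompact_closedBall (0 : Fin n → ℂ) R').image
    continuous_bidiag).isBounded.exists_norm_le
  exact ⟨C, fun l hl => hC _ ⟨l, by simpa using hl, rfl⟩⟩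

/-- grid point -/
noncomputable def grid {d n : ℕ} (h : ℝ) (J : Fin d → Fin n) : EuclideanSpace ℝ (Fin d) :=
  h • WithLp.toLp 2 (fun k => ((J k : ℕ) : ℝ))

lemma grid_apply {d n : ℕ} (h : ℝ) (J : Fin d → Fin n) (k : Fin d) :
    grid h J k = h * ((J k : ℕ) : ℝ) := by
  simp [grid]

lemma grid_injective {d n : ℕ} {h : ℝ} (hh : h ≠ 0) :
    Function.Injective (grid (d := d) (n := n) h) := by
  intro J J' hJ
  funext k
  have := congrArg (fun x : EuclideanSpace ℝ (Fin d) => x k) hJ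
  simp only [grid_apply] at this
  have h2 := mul_left_cancel₀ hh this
  exact Fin.ext (by exact_mod_cast h2)

/-- evaluation of the tuple at the k-th basis vector -/
noncomputable def coord (d n : ℕ) (k : Fin d) :
    (Fin n → (EuclideanSpace ℝ (Fin d) →L[ℝ] ℂ)) →L[ℂ] (Fin n → ℂ) :=
  ContinuousLinearMap.pi fun i =>
    (LinearMap.mkContinuous
      { toFun := fun g : EuclideanSpace ℝ (Fin d) →L[ℝ] ℂ => g (EuclideanSpace.single k 1)
        map_add' := fun _ _ => rfl
        map_smul' := fun _ _ => rfl } 1 (fun g => by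
          have := g.le_opNorm (EuclideanSpace.single k 1)
          simpa using this)).comp
      (ContinuousLinearMap.proj (R := ℂ)
        (φ := fun _ : Fin n => (EuclideanSpace ℝ (Fin d) →L[ℝ] ℂ)) i)

lemma coord_apply {d n : ℕ} (k : Fin d) (lam : Fin n → (EuclideanSpace ℝ (Fin d) →L[ℝ] ℂ))
    (i : Fin n) : coord d n k lam i = lam i (EuclideanSpace.single k 1) := rfl

lemma coord_norm {d n : ℕ} (k : Fin d) (lam : Fin n → (EuclideanSpace ℝ (Fin d) →L[ℝ] ℂ)) :
    ‖coord d n k lam‖ ≤ ‖lam‖ := by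
  rw [pi_norm_le_iff_of_nonneg (norm_nonneg _)]
  intro i
  rw [coord_apply]
  refine le_trans ?_ (norm_le_pi_norm lam i)
  have := (lam i).le_opNorm (EuclideanSpace.single k 1)
  simpa using this

lemma functional_expand {d : ℕ} (μ : EuclideanSpace ℝ (Fin d) →L[ℝ] ℂ)
    (v : EuclideanSpace ℝ (Fin d)) :
    μ v = ∑ k, μ (EuclideanSpace.single k 1) * ((v k : ℝ) : ℂ) := by
  have hv : v = ∑ k, v k • EuclideanSpace.single k (1 : ℝ) := by
    have := (EuclideanSpace.basisFun (Fin d) ℝ).sum_repr v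
    simpa using this.symm
  conv_lhs => rw [hv]
  simp [mul_comm]

end PolyExp

open PolyExp in
/-- Local holomorphic sections (by restriction to a suitable finite set `Y`) for the
family of spaces of polynomial exponential functions, inside weighted sup-norm spaces. -/
theorem stmt_3 (d n : ℕ) (hd : 1 ≤ d) (hn : 1 ≤ n) :
    ∀ R' : ℝ, 0 < R' → ∀ U : Set (EuclideanSpace ℝ (Fin d)), IsOpen U →
      (0 : EuclideanSpace ℝ (Fin d)) ∈ U →
    ∃ R₀ : ℝ, 0 < R₀ ∧ ∀ R : ℝ, R₀ < R →
      ∃ (Y : Finset (EuclideanSpace ℝ (Fin d)))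
        (Φ : EuclideanSpace ℝ (Fin d) →
          (Fin n → (EuclideanSpace ℝ (Fin d) →L[ℝ] ℂ)) →
          BoundedContinuousFunction (EuclideanSpace ℝ (Fin d)) ℂ),
        (Y : Set (EuclideanSpace ℝ (Fin d))) ⊆ U ∧
        (∀ y ∈ Y, AnalyticOnNhd ℂ (Φ y) {lam | ‖lam‖ < R'}) ∧
        ∀ lam : Fin n → (EuclideanSpace ℝ (Fin d) →L[ℝ] ℂ), ‖lam‖ < R' →
          ∀ f ∈ polyExpSpace lam, ∀ v,
            f v = ∑ y ∈ Y, f y * Φ y lam v * Real.exp (R * ‖v‖) := by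
  classical
  intro R' hR' U hU h0U
  have : NeZero n := ⟨by omega⟩
  obtain ⟨C, hC⟩ := exists_bound (n := n) R'
  set C' : ℝ := max C 0 + 1 with hC'
  have hC'0 : 0 < C' := by positivity
  have hd0 : (0 : ℝ) < d := by exact_mod_cast hd
  refine ⟨d * C', by positivity, fun R hR => ?_⟩
  set r : ℝ := R / d with hr
  have hrC : C' < r := by rw [hr, lt_div_iff₀ hd0]; linarith
  have hbr : ∀ l : Fin n → ℂ, ‖l‖ ≤ R' → ‖bidiag l‖ < r := by
    intro l hl
    have := hC l hl
    have := le_max_left C 0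
    linarith
  have hev : ∀ᶠ h : ℝ in 𝓝[>] 0, ∀ J : Fin d → Fin n, grid h J ∈ U := by
    rw [eventually_all]
    intro J
    apply nhdsWithin_le_nhds
    have hc : Continuous fun h : ℝ => grid h J := by unfold grid; fun_prop
    exact hc.continuousAt.eventually_mem (hU.mem_nhds (by simpa [grid] using h0U))
  obtain ⟨h, hM, hgU, hpos⟩ :=
    ((eventually_unit (n := n) R').and (hev.and self_mem_nhdsWithin)).exists
  have hpos : 0 < h := hpos
  have hinj := grid_injective (d := d) (n := n) hpos.ne'
  choose c hc1 hc2 using fun k : Fin d =>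
    one_dim (V := EuclideanSpace ℝ (Fin d)) R' h r hM (hC'0.trans hrC) hbr (fun v => v k)
      (by fun_prop) (fun v => by simpa using PiLp.norm_apply_le v k)
  set Ψ : (Fin d → Fin n) → (Fin n → (EuclideanSpace ℝ (Fin d) →L[ℝ] ℂ)) →
      BoundedContinuousFunction (EuclideanSpace ℝ (Fin d)) ℂ :=
    fun J lam => ∏ k, c k (J k) (coord d n k lam) with hΨ
  refine ⟨Finset.univ.image (grid (d := d) (n := n) h), fun y => Ψ (Function.invFun (grid h) y), ?_, ?_, ?_⟩
  · intro y hy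
    simp only [Finset.coe_image, Finset.coe_univ, Set.image_univ, Set.mem_range] at hy
    obtain ⟨J, rfl⟩ := hy
    exact hgU J
  · intro y _
    apply Finset.analyticOnNhd_fun_prod
    intro k _ lam hlam
    have hl : coord d n k lam ∈ Metric.ball (0 : Fin n → ℂ) R' :=
      mem_ball_zero_iff.2 ((coord_norm k lam).trans_lt hlam)
    exact (hc1 k _ _ hl).comp ((coord d n k).analyticAt lam)
  · intro lam hlam f hf v
    rw [Finset.sum_image (fun _ _ _ _ hh => hinj hh)]
    simp only [Function.leftInverse_invFun hinj _]
    -- monomials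
    have mono : ∀ (μ : EuclideanSpace ℝ (Fin d) →L[ℝ] ℂ) (α : Fin d → ℕ),
        (∀ k, α k < (Finset.univ.filter fun j : Fin n => lam j = μ).card) →
        Complex.exp (μ v) * ∏ k, ((v k : ℝ) : ℂ) ^ α k =
          ∑ J : Fin d → Fin n, (Complex.exp (μ (grid h J)) *
            ∏ k, ((grid h J k : ℝ) : ℂ) ^ α k) * (Ψ J lam v * Real.exp (R * ‖v‖)) := by
      intro μ α hα
      have e1 : ∀ x : EuclideanSpace ℝ (Fin d), Complex.exp (μ x) * ∏ k, ((x k : ℝ) : ℂ) ^ α k =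
          ∏ k, (Complex.exp (μ (EuclideanSpace.single k 1) * ((x k : ℝ) : ℂ)) *
            ((x k : ℝ) : ℂ) ^ α k) := by
        intro x
        rw [functional_expand, Complex.exp_sum, Finset.prod_mul_distrib]
      have e2 : ((Real.exp (R * ‖v‖) : ℝ) : ℂ) =
          ∏ _k : Fin d, ((Real.exp (r * ‖v‖) : ℝ) : ℂ) := by
        rw [Finset.prod_const, Finset.card_univ, Fintype.card_fin, ← Complex.ofReal_pow,
          ← Real.exp_nat_mul]
        congr 2
        rw [hr]; field_simp
      rw [e1]
      simp_rw [e1]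
      have e3 : ∀ k : Fin d, _ := fun k => hc2 k (coord d n k lam)
        ((coord_norm k lam).trans_lt hlam) (μ (EuclideanSpace.single k 1)) (α k)
        (lt_of_lt_of_le (hα k) (Finset.card_le_card (by
          intro i hi
          simp only [Finset.mem_filter, Finset.mem_univ, true_and] at hi ⊢
          rw [coord_apply, hi]))) v
      rw [Finset.prod_congr rfl fun k _ => e3 k, Finset.prod_univ_sum, Fintype.piFinset_univ]
      refine Finset.sum_congr rfl fun J _ => ?_
      rw [e2, hΨ]
      simp only [BoundedContinuousFunction.coe_prod, Finset.prod_apply]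
      rw [← Finset.prod_mul_distrib, ← Finset.prod_mul_distrib]
      refine Finset.prod_congr rfl fun k _ => ?_
      rw [grid_apply]
      push_cast
      rw [mul_comm (h : ℂ)]
    obtain ⟨P, hP, hfP⟩ := hf
    have poly : ∀ μ ∈ Finset.univ.image lam,
        Complex.exp (μ v) * MvPolynomial.eval (fun j => ((v j : ℝ) : ℂ)) (P μ) =
          ∑ J : Fin d → Fin n, (Complex.exp (μ (grid h J)) *
            MvPolynomial.eval (fun j => ((grid h J j : ℝ) : ℂ)) (P μ)) *
              (Ψ J lam v * Real.exp (R * ‖v‖)) := by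
      intro μ hμ
      obtain ⟨i, -, rfl⟩ := Finset.mem_image.1 hμ
      simp only [MvPolynomial.eval_eq', Finset.mul_sum, Finset.sum_mul]
      rw [Finset.sum_comm]
      refine Finset.sum_congr rfl fun α hα => ?_
      have hαk : ∀ k, α k < (Finset.univ.filter fun j : Fin n => lam j = lam i).card := by
        intro k
        have h1 := MvPolynomial.le_totalDegree hα
        have h2 : α k ≤ α.sum fun _ e => e := by
          rw [Finsupp.sum_fintype _ _ (fun _ => rfl)]
          exact Finset.single_le_sum (f := fun k => α k) (fun _ _ => Nat.zero_le _)
            (Finset.mem_univ k)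
        have h3 := hP i
        refine lt_of_le_of_lt (h2.trans h1) ?_
        convert h3
      rw [mul_left_comm, mono (lam i) α hαk, Finset.mul_sum]
      refine Finset.sum_congr rfl fun J _ => ?_
      ring
    simp only [hfP]
    have hfin : ∀ x : EuclideanSpace ℝ (Fin d), f x = ∑ μ ∈ Finset.univ.image lam,
        Complex.exp (μ x) * MvPolynomial.eval (fun j => ((x j : ℝ) : ℂ)) (P μ) := by
      intro x
      rw [hfP]
    simp only [← hfP]
    rw [hfin v, Finset.sum_congr rfl poly, Finset.sum_comm]
    refine Finset.sum_congr rfl fun J _ => ?_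
    rw [hfin (grid h J), mul_assoc, Finset.sum_mul]
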